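/- Let x be a higher-order type in which each label occurs at most once and let B ∈ out(x). If b ∈ D(x), then the bit assignment b′ defined by b′ B = false and b′ i = b i for i ≠ B also belongs to D(x). -/

import Mathlib

/-- Higher-order types over a type `σ` of elementary labels. -/
inductive Ty (σ : Type) : Type where
  | elem : σ → Ty σ
  | arrow : Ty σ → Ty σ → Ty σ

namespace Ty

variable {σ : Type} [DecidableEq σ]

/-- The labels occurring in a type. -/
def leaves : Ty σ → Finset σ
  | elem A => {A}
  | arrow x y => leaves x ∪ leaves y

/-- Every label occurs at most once. -/
def NoDup : Ty σ → Prop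
  | elem _ => True
  | arrow x y => NoDup x ∧ NoDup y ∧ Disjoint x.leaves y.leaves

/-- The pair (input labels, output labels) of a type. -/
def inOut : Ty σ → Finset σ × Finset σ
  | elem A => (∅, {A})
  | arrow x y => ((inOut x).2 ∪ (inOut y).1, (inOut x).1 ∪ (inOut y).2)

/-- Input labels. -/
def ins (x : Ty σ) : Finset σ := (inOut x).1

/-- Output labels. -/
def outs (x : Ty σ) : Finset σ := (inOut x).2

/-- A bit assignment `b` is all-ones on a finite set `S` of labels. -/
def AllOnes (b : σ → Bool) (S : Finset σ) : Prop := ∀ i ∈ S, b i = true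

/-- The set `D(x)` of bit assignments of a type. -/
def D : Ty σ → Set (σ → Bool)
  | elem A => {b | b A = false}
  | arrow x y => {b | b ∈ D y} ∪ {b | b ∉ D x ∧ ¬ AllOnes b x.leaves ∧ b ∉ D y}

/-- The immediate subterm relation. -/
inductive ImmSub : Ty σ → Ty σ → Prop
  | left (x z : Ty σ) : ImmSub x (arrow x z)
  | right (x z : Ty σ) : ImmSub x (arrow z x)

/-- Subterms: reflexive-transitive closure of the immediate subterm relation. -/
def Subterm {σ : Type} : Ty σ → Ty σ → Prop := Relation.ReflTransGen ImmSub

/-- The critical set `S(x,A,B)`. -/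
def Sset (x : Ty σ) (A B : σ) : Set (σ → Bool) :=
  {b | b A = false ∧ b B = false ∧ AllOnes b (x.outs \ {B})}

/-- `x` is no-signalling from `A` to `B`. -/
def NoSig (x : Ty σ) (A B : σ) : Prop := D x ∩ Sset x A B = ∅

/-- `x` is full-signalling from `A` to `B`. -/
def FullSig (x : Ty σ) (A B : σ) : Prop :=
  ¬ ∃ b : σ → Bool, ¬ AllOnes b x.leaves ∧ b ∉ D x ∧ b A = false ∧ b B = false ∧
    AllOnes b (x.ins \ {A})

/-- A pairing on `x`: a finite set of pairs (input label, output label) with all first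
components distinct and all second components distinct. -/
def IsPairing (x : Ty σ) (H : Finset (σ × σ)) : Prop :=
  (∀ p ∈ H, p.1 ∈ x.ins ∧ p.2 ∈ x.outs) ∧
  (∀ p ∈ H, ∀ q ∈ H, p.1 = q.1 → p = q) ∧
  (∀ p ∈ H, ∀ q ∈ H, p.2 = q.2 → p = q)

/-- The critical set `S(x,H)` for a pairing `H`. -/
def SsetH (x : Ty σ) (H : Finset (σ × σ)) : Set (σ → Bool) :=
  {b | AllOnes b (x.outs \ H.image Prod.snd) ∧ (∀ p ∈ H, b p.1 = b p.2) ∧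
    ∃ p ∈ H, b p.1 = false}

/-- The set `D(x ⊗ y)` for the tensor of two types with disjoint leaves. -/
def Dtensor (x y : Ty σ) : Set (σ → Bool) :=
  {b | b ∈ D x ∧ AllOnes b y.leaves} ∪ {b | b ∈ D y ∧ AllOnes b x.leaves} ∪ (D x ∩ D y)

/-- No-signalling from `A` to `B` for given data (set of bit assignments, output labels). -/
def NoSigData (D0 : Set (σ → Bool)) (outs0 : Finset σ) (A B : σ) : Prop :=
  D0 ∩ {b | b A = false ∧ b B = false ∧ AllOnes b (outs0 \ {B})} = ∅

/-- Full-signalling from `A` to `B` for given data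
(set of bit assignments, leaves, input labels). -/
def FullSigData (D0 : Set (σ → Bool)) (leaves0 ins0 : Finset σ) (A B : σ) : Prop :=
  ¬ ∃ b : σ → Bool, ¬ AllOnes b leaves0 ∧ b ∉ D0 ∧ b A = false ∧ b B = false ∧
    AllOnes b (ins0 \ {A})

end Ty

namespace Ty

theorem allOnes_congr {σ : Type} {b c : σ → Bool} {S : Finset σ}
    (h : ∀ i ∈ S, b i = c i) :
    AllOnes b S ↔ AllOnes c S :=
  forall₂_congr fun i hi => by rw [h i hi]

theorem AllOnes.mono {σ : Type} {b : σ → Bool} {S T : Finset σ} (hT : AllOnes b T)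
    (h : S ⊆ T) : AllOnes b S :=
  fun i hi => hT i (h hi)

variable {σ : Type} [DecidableEq σ]

theorem mem_ins_arrow {x y : Ty σ} {B : σ} :
    B ∈ (arrow x y).ins ↔ B ∈ x.outs ∨ B ∈ y.ins := by
  simp [ins, outs, inOut]

theorem mem_outs_arrow {x y : Ty σ} {B : σ} :
    B ∈ (arrow x y).outs ↔ B ∈ x.ins ∨ B ∈ y.outs := by
  simp [ins, outs, inOut]

theorem mem_D_arrow {x y : Ty σ} {b : σ → Bool} :
    b ∈ D (arrow x y) ↔ b ∈ D y ∨ b ∉ D x ∧ ¬ AllOnes b x.leaves := by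
  simp only [D, Set.mem_union, Set.mem_ofPred_eq]
  tauto

theorem ins_subset_leaves_and_outs_subset_leaves (x : Ty σ) :
    x.ins ⊆ x.leaves ∧ x.outs ⊆ x.leaves := by
  induction x with
  | elem A => simp [ins, outs, inOut, leaves]
  | arrow x y ihx ihy =>
    exact ⟨Finset.union_subset_union ihx.2 ihy.1, Finset.union_subset_union ihx.1 ihy.2⟩

/-- Membership in `D x` depends only on the values at the leaves of `x`. -/
theorem mem_D_congr {x : Ty σ} {b c : σ → Bool} (h : ∀ i ∈ x.leaves, b i = c i) :
    b ∈ D x ↔ c ∈ D x := by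
  induction x with
  | elem A => simp [D, h A (by simp [leaves])]
  | arrow x y ihx ihy =>
    have hx : ∀ i ∈ x.leaves, b i = c i := fun i hi => h i (Finset.mem_union_left _ hi)
    have hy : ∀ i ∈ y.leaves, b i = c i := fun i hi => h i (Finset.mem_union_right _ hi)
    rw [mem_D_arrow, mem_D_arrow, ihx hx, ihy hy, allOnes_congr hx]

theorem update_eq_of_notMem {b : σ → Bool} {B : σ} {v : Bool} {S : Finset σ} (hB : B ∉ S) :
    ∀ i ∈ S, Function.update b B v i = b i :=
  fun _ hi => Function.update_of_ne (ne_of_mem_of_not_mem hi hB) _ _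

theorem not_allOnes_update_false {b : σ → Bool} {B : σ} {S : Finset σ} (hB : B ∈ S) :
    ¬ AllOnes (Function.update b B false) S :=
  fun h => by simpa using h B hB

theorem notMem_D_of_allOnes {x : Ty σ} {b : σ → Bool} (h : AllOnes b x.leaves) : b ∉ D x := by
  induction x with
  | elem A => simp [D, h A (by simp [leaves])]
  | arrow x y ihx ihy =>
    have hx : AllOnes b x.leaves := h.mono Finset.subset_union_left
    have hy : AllOnes b y.leaves := h.mono Finset.subset_union_right
    rw [mem_D_arrow]
    exact fun h => h.elim (ihy hy) fun h => h.2 hx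

/-- Setting an output bit to `false` sends `D x` and the all-ones assignments into `D x`;
setting an input bit to `false` preserves the complement of `D x`. -/
theorem update_false_mem_D_and_notMem_D {x : Ty σ} (hx : x.NoDup) (B : σ) (b : σ → Bool) :
    (B ∈ x.outs → b ∈ D x ∨ AllOnes b x.leaves → Function.update b B false ∈ D x) ∧
    (B ∈ x.ins → b ∉ D x → Function.update b B false ∉ D x) := by
  induction x with
  | elem A =>
    simp only [outs, ins, inOut, D, Finset.mem_singleton, Finset.notMem_empty]
    exact ⟨fun h _ => by simp [h], False.elim⟩
  | arrow x y ihx ihy =>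
    obtain ⟨hnx, hny, hdisj⟩ := hx
    obtain ⟨outx, inx⟩ := ihx hnx
    obtain ⟨outy, iny⟩ := ihy hny
    obtain ⟨insx, outsx⟩ := ins_subset_leaves_and_outs_subset_leaves x
    obtain ⟨insy, outsy⟩ := ins_subset_leaves_and_outs_subset_leaves y
    have congr_x (h : B ∈ y.leaves) := update_eq_of_notMem (b := b) (v := false)
      (Finset.disjoint_right.mp hdisj h)
    have congr_y (h : B ∈ x.leaves) := update_eq_of_notMem (b := b) (v := false)
      (Finset.disjoint_left.mp hdisj h)
    rw [mem_outs_arrow, mem_ins_arrow, mem_D_arrow, mem_D_arrow]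
    constructor
    · rintro (h | h) hb
      · rw [mem_D_congr (congr_y (insx h))]
        have hne := not_allOnes_update_false (b := b) (insx h)
        rcases hb with (hby | ⟨hbx, -⟩) | hb
        · exact Or.inl hby
        · exact Or.inr ⟨inx h hbx, hne⟩
        · exact Or.inr ⟨inx h (notMem_D_of_allOnes (hb.mono Finset.subset_union_left)), hne⟩
      · rw [mem_D_congr (congr_x (outsy h)), allOnes_congr (congr_x (outsy h))]
        rcases hb with (hby | hbx) | hb
        · exact Or.inl (outy h (Or.inl hby))
        · exact Or.inr hbx
        · exact Or.inl (outy h (Or.inr (hb.mono Finset.subset_union_right)))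
    · rintro (h | h) hb
      · rw [mem_D_congr (congr_y (outsx h))]
        rintro (hby | ⟨hbx, -⟩)
        · exact hb (Or.inl hby)
        · refine hb (Or.inr ⟨fun hx => hbx (outx h (Or.inl hx)), fun ho => ?_⟩)
          exact hbx (outx h (Or.inr ho))
      · rw [mem_D_congr (congr_x (insy h)), allOnes_congr (congr_x (insy h))]
        rintro (hby | hbx)
        · exact iny h (fun hy => hb (Or.inl hy)) hby
        · exact hb (Or.inr hbx)

end Ty

open Ty in
/-- flipping an output bit of an element of `D(x)` to `false` stays in `D(x)`. -/
theorem stmt5 {σ : Type} [DecidableEq σ] (x : Ty σ) (hx : x.NoDup)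
    (B : σ) (hB : B ∈ x.outs) (b : σ → Bool) (hb : b ∈ D x) :
    Function.update b B false ∈ D x := by
  exact (update_false_mem_D_and_notMem_D hx B b).1 hB (Or.inl hb)
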